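/- Let n ≥ 2, a ∈ ℝⁿ, and let x, y ∈ ℝⁿ \ {a} with x ≠ y. Then log(1 + |x−y|/min(|x−a|, |y−a|)) ≤ 2·log(1 + q(x,y)/min{q(x,a), q(y,a), 1/σ(x), 1/σ(y)}). (This is the inequality j_{G_a} ≤ 2·ĵ_{G_a} for the punctured space G_a = ℝⁿ \ {a}, whose boundary in the Möbius space S̄ⁿ = ℝⁿ ∪ {∞} is {a, ∞}.) -/

import Mathlib

/-!
The only property of `σ` that matters is that it is positive and `1`-Lipschitz, which
`σ(x) = |1 + i|x||` inherits from the norms. Let `x` be the point nearer to `a`, and put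
`d = |x - y|`, `r = |x - a|`, `A = σ(a)`, with `Q` the chordal quotient; the claim becomes
`d / r ≤ Q (2 + Q)`. As `σ(x) ≤ A + r` and `σ(y) ≤ A + r + d`, comparing `q(x, y)` with
`q(y, ∞)` and with `q(x, a)` gives
`Q ≥ d / (A + r)` and `Q ≥ d A / (r (A + r + d))`.
Bound the factor `2 + Q` from below by the first of these. Bounding the factor `Q` by the first one
suffices exactly when `A² ≤ r (r + d)`, and by the second one exactly when `r (r + d) ≤ A²`.
-/

/-- `σ(x) = √(1 + |x|²)`. -/
noncomputable def sigmaFn {n : ℕ} (x : EuclideanSpace ℝ (Fin n)) : ℝ :=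
  Real.sqrt (1 + ‖x‖ ^ 2)

/-- The chordal (spherical) distance between two finite points of the Möbius space
`S̄ⁿ = ℝⁿ ∪ {∞}`: `q(x,y) = |x−y|/(σ(x)σ(y))`. -/
noncomputable def chordal {n : ℕ} (x y : EuclideanSpace ℝ (Fin n)) : ℝ :=
  ‖x - y‖ / (sigmaFn x * sigmaFn y)

open Real

theorem lipschitzWith_sqrt_one_add_sq : LipschitzWith 1 fun t : ℝ ↦ √(1 + t ^ 2) := by
  have norm_eq (t : ℝ) : √(1 + t ^ 2) = ‖(1 + t * Complex.I : ℂ)‖ := by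
    simpa using (Complex.norm_add_mul_I 1 t).symm
  refine .of_le_add fun s t ↦ ?_
  calc √(1 + s ^ 2) = ‖(1 + t * Complex.I : ℂ) + (s - t : ℝ) * Complex.I‖ := by
        rw [norm_eq]; congr 1; push_cast; ring
    _ ≤ ‖(1 + t * Complex.I : ℂ)‖ + ‖((s - t : ℝ) * Complex.I : ℂ)‖ := norm_add_le _ _
    _ = √(1 + t ^ 2) + dist s t := by
        rw [norm_eq, norm_mul, Complex.norm_I, mul_one, Complex.norm_real, dist_eq_norm]

theorem lipschitzWith_sqrt_one_add_norm_sq {E : Type*} [SeminormedAddCommGroup E] :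
    LipschitzWith 1 fun x : E ↦ √(1 + ‖x‖ ^ 2) := by
  simpa only [Function.comp_def, mul_one] using
    lipschitzWith_sqrt_one_add_sq.comp (lipschitzWith_one_norm (E := E))

theorem div_le_mul_two_add_of_le {d r A Q : ℝ} (hd : 0 ≤ d) (hr : 0 < r) (hA : 0 < A)
    (h₁ : d / (A + r) ≤ Q) (h₂ : d * A / (r * (A + r + d)) ≤ Q) :
    d / r ≤ Q * (2 + Q) := by
  have hQ : 0 ≤ Q := le_trans (by positivity) h₁
  have two_add_eq : 2 + d / (A + r) = (2 * (A + r) + d) / (A + r) := by field_simp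
  rcases le_total (A ^ 2) (r * (r + d)) with h | h
  · have two_add_ge : (A + r) / r ≤ 2 + d / (A + r) := by
      rw [two_add_eq, div_le_div_iff₀ hr (by positivity)]
      linarith
    calc d / r = d / (A + r) * ((A + r) / r) := by field_simp
      _ ≤ d / (A + r) * (2 + d / (A + r)) := by gcongr
      _ ≤ Q * (2 + Q) := by gcongr
  · have two_add_ge : (A + r + d) / A ≤ 2 + d / (A + r) := by
      rw [two_add_eq, div_le_div_iff₀ hA (by positivity)]
      linarith
    calc d / r = d * A / (r * (A + r + d)) * ((A + r + d) / A) := by field_simp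
      _ ≤ d * A / (r * (A + r + d)) * (2 + d / (A + r)) := by gcongr
      _ ≤ Q * (2 + Q) := by gcongr

section WeightedDist

variable {X : Type*} [PseudoMetricSpace X] {σ : X → ℝ} {a x y : X} {m : ℝ}

/-- The distance function `q(x, y) = d(x, y) / (σ(x) σ(y))` with weight `σ`, modelled on the chordal
metric, where `σ(x) = √(1 + |x|²)`; in general it need not satisfy the triangle inequality. The
point at infinity is not adjoined to `X`: the distance to it from `x` is written `1 / σ x`. -/
noncomputable def weightedDist (σ : X → ℝ) (x y : X) : ℝ :=
  dist x y / (σ x * σ y)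

theorem weightedDist_comm (σ : X → ℝ) (x y : X) : weightedDist σ x y = weightedDist σ y x := by
  rw [weightedDist, weightedDist, dist_comm, mul_comm]

theorem weightedDist_nonneg (hσ : ∀ z, 0 < σ z) (x y : X) : 0 ≤ weightedDist σ x y :=
  div_nonneg dist_nonneg (mul_pos (hσ x) (hσ y)).le

theorem weightedDist_pos (hσ : ∀ z, 0 < σ z) (hxy : 0 < dist x y) : 0 < weightedDist σ x y :=
  div_pos hxy (mul_pos (hσ x) (hσ y))

theorem weightedDist_div_one_div (hy : σ y ≠ 0) :
    weightedDist σ x y / (1 / σ y) = dist x y / σ x := by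
  unfold weightedDist
  field_simp

theorem weightedDist_div_weightedDist (hx : σ x ≠ 0) :
    weightedDist σ x y / weightedDist σ x a = dist x y * σ a / (dist x a * σ y) := by
  unfold weightedDist
  field_simp

theorem dist_div_add_le_weightedDist_div (hσ : ∀ z, 0 < σ z) (hlip : LipschitzWith 1 σ)
    (hm : 0 < m) (hmy : m ≤ 1 / σ y) :
    dist x y / (σ a + dist x a) ≤ weightedDist σ x y / m := by
  have := hσ x
  have hx : σ x ≤ σ a + dist x a := by simpa using hlip.le_add_mul x a
  calc dist x y / (σ a + dist x a) ≤ dist x y / σ x := by gcongr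
    _ = weightedDist σ x y / (1 / σ y) := (weightedDist_div_one_div (hσ y).ne').symm
    _ ≤ weightedDist σ x y / m := by
      have := weightedDist_nonneg hσ x y
      gcongr

theorem dist_mul_div_le_weightedDist_div (hσ : ∀ z, 0 < σ z) (hlip : LipschitzWith 1 σ)
    (hxa : 0 < dist x a) (hm : 0 < m) (hma : m ≤ weightedDist σ x a) :
    dist x y * σ a / (dist x a * (σ a + dist x a + dist x y)) ≤ weightedDist σ x y / m := by
  have := hσ a
  have := hσ y
  have hy : σ y ≤ σ a + dist x a + dist x y :=
    calc σ y ≤ σ a + dist y a := by simpa using hlip.le_add_mul y a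
      _ ≤ σ a + dist x a + dist x y := by linarith [dist_triangle_left y a x]
  calc dist x y * σ a / (dist x a * (σ a + dist x a + dist x y))
      ≤ dist x y * σ a / (dist x a * σ y) := by gcongr
    _ = weightedDist σ x y / weightedDist σ x a := (weightedDist_div_weightedDist (hσ x).ne').symm
    _ ≤ weightedDist σ x y / m := by
      have := weightedDist_nonneg hσ x y
      gcongr

theorem one_add_dist_div_le_sq (hσ : ∀ z, 0 < σ z) (hlip : LipschitzWith 1 σ)
    (hxa : 0 < dist x a) (hm : 0 < m) (hma : m ≤ weightedDist σ x a) (hmy : m ≤ 1 / σ y) :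
    1 + dist x y / dist x a ≤ (1 + weightedDist σ x y / m) ^ 2 := by
  have := div_le_mul_two_add_of_le dist_nonneg hxa (hσ a)
    (dist_div_add_le_weightedDist_div hσ hlip hm hmy)
    (dist_mul_div_le_weightedDist_div hσ hlip hxa hm hma)
  linarith

theorem j_le_two_jhat_punctured_general (hσ : ∀ z, 0 < σ z) (hlip : LipschitzWith 1 σ)
    (hxa : 0 < dist x a) (hya : 0 < dist y a) :
    log (1 + dist x y / min (dist x a) (dist y a)) ≤
      2 * log (1 + weightedDist σ x y /
        min (min (weightedDist σ x a) (weightedDist σ y a)) (min (1 / σ x) (1 / σ y))) := by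
  set m := min (min (weightedDist σ x a) (weightedDist σ y a)) (min (1 / σ x) (1 / σ y)) with hm_def
  have hm : 0 < m :=
    lt_min (lt_min (weightedDist_pos hσ hxa) (weightedDist_pos hσ hya))
      (lt_min (one_div_pos.2 (hσ x)) (one_div_pos.2 (hσ y)))
  have one_add_le_sq :
      1 + dist x y / min (dist x a) (dist y a) ≤ (1 + weightedDist σ x y / m) ^ 2 := by
    rcases le_total (dist x a) (dist y a) with h | h
    · rw [min_eq_left h]
      exact one_add_dist_div_le_sq hσ hlip hxa hm (by simp [hm_def]) (by simp [hm_def])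
    · rw [min_eq_right h, dist_comm x y, weightedDist_comm σ x y]
      exact one_add_dist_div_le_sq hσ hlip hya hm (by simp [hm_def]) (by simp [hm_def])
  calc log (1 + dist x y / min (dist x a) (dist y a))
      ≤ log ((1 + weightedDist σ x y / m) ^ 2) := log_le_log (by positivity) one_add_le_sq
    _ = 2 * log (1 + weightedDist σ x y / m) := by rw [log_pow, Nat.cast_ofNat]

end WeightedDist

theorem sigmaFn_pos {n : ℕ} (x : EuclideanSpace ℝ (Fin n)) : 0 < sigmaFn x := by
  unfold sigmaFn
  positivity

theorem lipschitzWith_sigmaFn {n : ℕ} : LipschitzWith 1 (sigmaFn (n := n)) :=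
  lipschitzWith_sqrt_one_add_norm_sq

theorem chordal_eq_weightedDist {n : ℕ} (x y : EuclideanSpace ℝ (Fin n)) :
    chordal x y = weightedDist sigmaFn x y := by
  rw [chordal, weightedDist, dist_eq_norm]

/-- For the punctured space `G_a = ℝⁿ \ {a}` (whose boundary in `S̄ⁿ` is `{a, ∞}`),
the Euclidean distance-ratio metric is bounded by twice the chordal distance-ratio
metric: `j_{G_a}(x,y) ≤ 2·ĵ_{G_a}(x,y)`. -/
theorem j_le_two_jhat_punctured {n : ℕ} (hn : 2 ≤ n)
    (a x y : EuclideanSpace ℝ (Fin n)) (hx : x ≠ a) (hy : y ≠ a) (hxy : x ≠ y) :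
    Real.log (1 + ‖x - y‖ / min ‖x - a‖ ‖y - a‖) ≤
      2 * Real.log (1 + chordal x y /
        min (min (chordal x a) (chordal y a))
            (min (1 / sigmaFn x) (1 / sigmaFn y))) := by
  simpa only [chordal_eq_weightedDist, dist_eq_norm] using
    j_le_two_jhat_punctured_general sigmaFn_pos lipschitzWith_sigmaFn (dist_pos.2 hx)
      (dist_pos.2 hy)
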